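/- Let m and δ be positive integers, let S = {m, m+δ, 2m+δ}, and let d = δ mod 2m. If m < d < 2m, then gcd(m,d) divides m·(m + 2δ + d), and for every x ≥ 1, v_S(x + m·(m + 2δ + d)/gcd(m,d)) = v_S(x); that is, the nim-sequence of S is purely periodic with period m·(m + 2δ + d)/gcd(m,d). -/

import Mathlib

/-- The minimum excludant of a finite set of naturals. -/
noncomputable def mex (A : Finset ℕ) : ℕ := sInf {n : ℕ | n ∉ A}

/-- The sink-subtraction nim-value function: `sinkVal S 0 = 0`, and for `x ≥ 1`,
`sinkVal S x = mex { sinkVal S (x ∸ s) : s ∈ S }` (when every `s ∈ S` is positive,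
since `(x+1) - s = x - (s-1)` in truncated subtraction). -/
noncomputable def sinkVal (S : Finset ℕ) : ℕ → ℕ
  | 0 => 0
  | x + 1 => mex (S.image fun s => sinkVal S (x - (s - 1)))
termination_by x => x
decreasing_by omega

/-!
Put `n = m + δ` and split the positions into columns, the residue classes modulo `m`. Going up a
column, the nim-values form alternating phases: a 12-phase, reading `1, 2, 1, 2, …, 1, 2`, then a
03-phase, reading `0, 3, 0, 3, …` backwards from its last position. Moving by `m` stays in the
column. Moving by `n` from a 03-phase lands in the 12-phase of equal index in the column reached,
and moving by `n` from a 12-phase lands in the preceding 03-phase (or in the sink), or on the first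
position of the 12-phase of equal index. These facts only compare the endpoints of phases in
different columns, and they force the mex rule to reproduce the pattern. With `e = d - m`, so that
`n ≡ e` modulo `2m` and `0 ≤ e ≤ m`, the endpoints are given by a closed formula in which the `j`-th
phase depends on the column of `x` only through the residues of `x - ej` and `x - 2ej` modulo `m`.
Hence advancing `q` phases is a translation by `(2n + e)q` whenever `m ∣ eq`.
-/

/-! ### Sink subtraction and mex -/

lemma mex_eq_of_forall_lt {A : Finset ℕ} {k : ℕ} (hk : k ∉ A) (hlt : ∀ i < k, i ∈ A) :
    mex A = k :=
  le_antisymm (Nat.sInf_le hk)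
    (le_csInf ⟨k, hk⟩ fun _ hb => not_lt.mp fun hbk => hb (hlt _ hbk))

lemma mex_triple_eq {a b c k : ℕ} (hk : k ≠ a ∧ k ≠ b ∧ k ≠ c)
    (hlt : ∀ i < k, i = a ∨ i = b ∨ i = c) : mex {a, b, c} = k :=
  mex_eq_of_forall_lt (by simpa using hk) fun i hi => by simpa using hlt i hi

lemma sinkVal_zero (S : Finset ℕ) : sinkVal S 0 = 0 := by rw [sinkVal]

lemma sinkVal_of_pos {S : Finset ℕ} (hS : ∀ s ∈ S, 0 < s) {x : ℕ} (hx : 0 < x) :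
    sinkVal S x = mex (S.image fun s => sinkVal S (x - s)) := by
  obtain ⟨y, rfl⟩ := Nat.exists_eq_add_of_lt hx
  rw [zero_add, sinkVal]
  congr 1
  refine Finset.image_congr fun s hs => ?_
  have := hS s hs
  exact congrArg (sinkVal S) (by omega)

/-- The nim-value recurrence for the subtraction set `{m, n, m + n}`, with the sink spread over all
nonpositive integers so that no move has to be truncated. -/
structure IsSinkValue (m n : ℤ) (f : ℤ → ℕ) : Prop where
  of_nonpos : ∀ x ≤ 0, f x = 0
  of_pos : ∀ x, 0 < x → f x = mex {f (x - m), f (x - n), f (x - n - m)}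

lemma isSinkValue_sinkVal {m n : ℕ} (hm : 0 < m) (hn : 0 < n) :
    IsSinkValue m n fun x => sinkVal {m, n, m + n} x.toNat where
  of_nonpos x hx := by rw [Int.toNat_of_nonpos hx, sinkVal_zero]
  of_pos x hx := by
    have hS : ∀ s ∈ ({m, n, m + n} : Finset ℕ), 0 < s := by
      simp only [Finset.mem_insert, Finset.mem_singleton]
      omega
    rw [sinkVal_of_pos hS (by omega : 0 < x.toNat), show (x - m).toNat = x.toNat - m by omega,
      show (x - n).toNat = x.toNat - n by omega,
      show (x - n - m).toNat = x.toNat - (m + n) by omega, Finset.image_insert,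
      Finset.image_insert, Finset.image_singleton]

/-! ### Multiples of `m` of either parity -/

lemma eq_or_add_le_of_dvd_sub {m a b : ℤ} (hab : a ≤ b) (h : m ∣ b - a) : b = a ∨ a + m ≤ b := by
  rcases hab.eq_or_lt with rfl | hlt
  · exact Or.inl rfl
  · have := Int.le_of_dvd (by omega) h
    omega

lemma two_mul_dvd_sub_iff {m t : ℤ} (hm : m ≠ 0) (h : m ∣ t) :
    2 * m ∣ t - m ↔ ¬ 2 * m ∣ t := by
  obtain ⟨k, rfl⟩ := h
  rw [mul_comm 2 m, show m * k - m = m * (k - 1) by ring, mul_dvd_mul_iff_left hm,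
    mul_dvd_mul_iff_left hm]
  omega

lemma two_mul_dvd_add_iff {m t : ℤ} (hm : m ≠ 0) (h : m ∣ t) :
    2 * m ∣ t + m ↔ ¬ 2 * m ∣ t := by
  rw [← two_mul_dvd_sub_iff hm h, ← dvd_add_self_right (b := t - m)]
  ring_nf

/-! ### Phase systems -/

/-- The boundaries of the phases of the columns (the residue classes modulo `m`): in the column of
`x`, the `j`-th 12-phase runs from `start j x` up to but excluding `finish j x`, and the `j`-th
03-phase from there up to but excluding `start (j + 1) x`. The last three fields compare the columns
of `x` and `x - n`. -/
structure PhaseSystem (m n : ℤ) where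
  start : ℕ → ℤ → ℤ
  finish : ℕ → ℤ → ℤ
  start_sub_self : ∀ j x, start j (x - m) = start j x
  dvd_sub_start : ∀ j x, m ∣ x - start j x
  start_zero_pos : ∀ x, 0 < start 0 x
  start_zero_le : ∀ x, start 0 x ≤ m
  two_mul_dvd_finish_sub_start : ∀ j x, 2 * m ∣ finish j x - start j x
  start_add_two_mul_le_finish : ∀ j x, start j x + 2 * m ≤ finish j x
  start_succ : ∀ j x, start (j + 1) x = finish j (x - n) + n
  start_sub_add_le_finish : ∀ j x, start j (x - n) + n ≤ finish j x
  finish_le_start_sub_add : ∀ j x, finish j x ≤ start j (x - n) + n + m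

namespace PhaseSystem

variable {m n : ℤ} (P : PhaseSystem m n) {f : ℤ → ℕ} {j : ℕ} {x y : ℤ}

lemma finish_eq (j : ℕ) (x : ℤ) : P.finish j x = P.start (j + 1) (x + n) - n := by
  rw [start_succ, add_sub_cancel_right, add_sub_cancel_right]

lemma finish_sub_self (j : ℕ) (x : ℤ) : P.finish j (x - m) = P.finish j x := by
  rw [finish_eq, sub_add_eq_add_sub, start_sub_self, finish_eq]

lemma dvd_sub_finish (j : ℕ) (x : ℤ) : m ∣ x - P.finish j x := by
  have h := (P.dvd_sub_start j x).sub
    ((dvd_mul_left m 2).trans (P.two_mul_dvd_finish_sub_start j x))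
  rwa [sub_sub, add_sub_cancel] at h

include P in
lemma modulus_pos : 0 < m := (P.start_zero_pos 0).trans_le (P.start_zero_le 0)

include P in
lemma shift_pos : 0 < n := by
  have h₁ := P.start_zero_pos 0
  have h₂ := P.start_zero_le (0 - n)
  have h₃ := P.start_add_two_mul_le_finish 0 0
  have h₄ := P.finish_le_start_sub_add 0 0
  omega

lemma finish_add_le_start_succ (j : ℕ) (x : ℤ) : P.finish j x + m ≤ P.start (j + 1) x := by
  have h₁ := P.start_succ j x
  have h₂ := P.start_add_two_mul_le_finish j (x - n)
  have h₃ := P.finish_le_start_sub_add j x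
  omega

lemma start_lt_start_succ (j : ℕ) (x : ℤ) : P.start j x < P.start (j + 1) x := by
  have h₁ := P.modulus_pos
  have h₂ := P.start_add_two_mul_le_finish j x
  have h₃ := P.finish_add_le_start_succ j x
  omega

lemma lt_start (j : ℕ) (x : ℤ) : (j : ℤ) < P.start j x := by
  induction j with
  | zero => exact P.start_zero_pos x
  | succ j ih =>
    have := P.start_lt_start_succ j x
    push_cast
    omega

lemma start_pos (j : ℕ) (x : ℤ) : 0 < P.start j x :=
  (Int.natCast_nonneg j).trans_lt (P.lt_start j x)

lemma start_add_shift_le (j : ℕ) (x : ℤ) : P.start j (x + n) + m ≤ P.start j x + n := by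
  have h₁ := P.start_add_two_mul_le_finish j (x + n)
  have h₂ := P.finish_le_start_sub_add j (x + n)
  rw [add_sub_cancel_right] at h₂
  omega

lemma start_zero_le_self (hx : 0 < x) : P.start 0 x ≤ x := by
  by_contra! hlt
  have h₁ := P.start_zero_le x
  have h₂ := Int.le_of_dvd (by omega) (dvd_sub_comm.mp (P.dvd_sub_start 0 x))
  omega

lemma start_zero_eq_add_self (hx : -m < x) (hx₀ : x ≤ 0) : P.start 0 x = x + m := by
  have h₁ := P.start_zero_pos x
  have h₂ := P.start_zero_le x
  have hdvd : m ∣ P.start 0 x - (x + m) := by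
    rw [← sub_sub]
    exact (dvd_sub_comm.mp (P.dvd_sub_start 0 x)).sub dvd_rfl
  exact sub_eq_zero.mp (Int.eq_zero_of_abs_lt_dvd hdvd (abs_lt.mpr ⟨by omega, by omega⟩))

lemma exists_mem_phase (hx : 0 < x) : ∃ j, P.start j x ≤ x ∧ x < P.start (j + 1) x := by
  classical
  have hex : ∃ j, x < P.start j x := ⟨x.toNat, (Int.self_le_toNat x).trans_lt (P.lt_start _ x)⟩
  obtain ⟨j, hj⟩ : ∃ j, Nat.find hex = j + 1 := Nat.exists_eq_succ_of_ne_zero fun h₀ => by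
    have := Nat.find_spec hex
    rw [h₀] at this
    exact this.not_ge (P.start_zero_le_self hx)
  exact ⟨j, not_lt.mp (Nat.find_min hex (by omega)), hj ▸ Nat.find_spec hex⟩

/-! ### The values within the phases -/

/-- The value of `f` at `x` is the one that the phase containing `x` prescribes: a 12-phase reads
`1, 2, …` from its first position, a 03-phase reads `0, 3, …` backwards from its last position. -/
def Predicts (f : ℤ → ℕ) (x : ℤ) : Prop :=
  ∀ j, (P.start j x ≤ x → x < P.finish j x → f x = if 2 * m ∣ x - P.start j x then 1 else 2) ∧
    (P.finish j x ≤ x → x < P.start (j + 1) x →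
      f x = if 2 * m ∣ P.start (j + 1) x - x then 3 else 0)

variable {P}

/-- The hypothesis `hstart` places `y` at or above the end of the preceding 12-phase without naming
it, so that `j = 0`, where `y` lies in the sink, needs no separate treatment. -/
lemma value_eq_zero_or_three (hf : IsSinkValue m n f) (hy : P.Predicts f y)
    (hstart : P.start j (y + n) ≤ y + n) (hlt : y < P.start j y) :
    f y = 0 ∨ f y = 3 ∧ 2 * m ∣ P.start j y - y := by
  cases j with
  | zero => exact Or.inl (hf.of_nonpos y (not_lt.mp fun h => hlt.not_ge (P.start_zero_le_self h)))
  | succ j =>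
    rw [start_succ, add_sub_cancel_right] at hstart
    rw [(hy j).2 (by omega) hlt]
    split_ifs with hdvd
    · exact Or.inr ⟨rfl, hdvd⟩
    · exact Or.inl rfl

lemma value_sub_eq_zero_or_three (hf : IsSinkValue m n f) (hprev : P.Predicts f (y - m))
    (hstart : P.start j (y + n) + m ≤ y + n) (hle : y ≤ P.start j y) :
    f (y - m) = 0 ∨ f (y - m) = 3 ∧ 2 * m ∣ P.start j y - y + m := by
  have hm := P.modulus_pos
  have h := value_eq_zero_or_three (j := j) hf hprev
    (by rw [sub_add_eq_add_sub, start_sub_self]; omega) (by rw [start_sub_self]; omega)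
  rwa [start_sub_self, ← sub_add] at h

lemma value_sub_eq_zero_of_eq_start (hf : IsSinkValue m n f) (hprev : P.Predicts f (x - m))
    (hx : x = P.start j x) : f (x - m) = 0 := by
  have hm := P.modulus_pos
  have hstart := P.start_add_shift_le j x
  refine (value_sub_eq_zero_or_three (j := j) hf hprev (by omega) hx.le).resolve_right
    fun ⟨_, hdvd⟩ => ?_
  rw [← hx, sub_self, zero_add] at hdvd
  have := Int.le_of_dvd hm hdvd
  omega

lemma value_sub_eq_ite_two_one (hprev : P.Predicts f (x - m)) (hstart : P.start j x + m ≤ x)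
    (hfinish : x < P.finish j x + m) : f (x - m) = if 2 * m ∣ x - P.start j x then 2 else 1 := by
  rw [(hprev j).1 (by rw [start_sub_self]; omega) (by rw [finish_sub_self]; omega), start_sub_self,
    sub_right_comm]
  simp only [two_mul_dvd_sub_iff P.modulus_pos.ne' (P.dvd_sub_start j x), ite_not]

lemma value_sub_eq_ite_zero_three (hprev : P.Predicts f (x - m)) (hfinish : P.finish j x + m ≤ x)
    (hlt : x < P.start (j + 1) x + m) :
    f (x - m) = if 2 * m ∣ P.start (j + 1) x - x then 0 else 3 := by
  rw [(hprev j).2 (by rw [finish_sub_self]; omega) (by rw [start_sub_self]; omega), start_sub_self,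
    ← sub_add]
  simp only [two_mul_dvd_add_iff P.modulus_pos.ne' (dvd_sub_comm.mp (P.dvd_sub_start (j + 1) x)),
    ite_not]

lemma value_sub_eq_two_of_eq_finish (hprev : P.Predicts f (x - m)) (hx : x = P.finish j x) :
    f (x - m) = 2 := by
  have hm := P.modulus_pos
  have hle := P.start_add_two_mul_le_finish j x
  have hdvd := P.two_mul_dvd_finish_sub_start j x
  rw [← hx] at hdvd
  rw [value_sub_eq_ite_two_one (j := j) hprev (by omega) (by omega), if_pos hdvd]

lemma value_eq_zero_or_value_sub_eq_zero (hf : IsSinkValue m n f) (hy : P.Predicts f y)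
    (hprev : P.Predicts f (y - m)) (hstart : P.start j (y + n) + m ≤ y + n)
    (hlt : y < P.start j y) : f y = 0 ∨ f (y - m) = 0 := by
  have hm := P.modulus_pos
  refine (value_eq_zero_or_three hf hy (by omega) hlt).imp_right fun ⟨_, hdvd⟩ =>
    (value_sub_eq_zero_or_three hf hprev hstart hlt.le).resolve_right fun ⟨_, hdvd'⟩ => ?_
  exact (two_mul_dvd_add_iff hm.ne' (dvd_sub_comm.mp (P.dvd_sub_start j y))).mp hdvd' hdvd

lemma value_sub_shift_sub_eq_two_or_zero_of_eq_start (hf : IsSinkValue m n f)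
    (hprev : P.Predicts f (x - n - m)) (hx : x = P.start j x) :
    f (x - n - m) = 2 ∨ f (x - n - m) = 0 := by
  cases j with
  | zero =>
    have h₁ := P.start_zero_le x
    have h₂ := P.shift_pos
    exact Or.inr (hf.of_nonpos _ (by omega))
  | succ j =>
    rw [start_succ, ← sub_eq_iff_eq_add] at hx
    exact Or.inl (value_sub_eq_two_of_eq_finish hprev hx)

lemma value_eq_one (hf : IsSinkValue m n f) (hprev : ∀ y < x, P.Predicts f y)
    (hstart : P.start j x ≤ x) (hfinish : x < P.finish j x) (hdvd : 2 * m ∣ x - P.start j x) :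
    f x = 1 := by
  have hm := P.modulus_pos
  have hn := P.shift_pos
  have hlt : x - n < P.start j (x - n) := by
    have hdvd' := (P.two_mul_dvd_finish_sub_start j x).sub hdvd
    rw [sub_sub_sub_cancel_right] at hdvd'
    have h₁ := Int.le_of_dvd (by omega) hdvd'
    have h₂ := P.finish_le_start_sub_add j x
    omega
  have hxn := value_eq_zero_or_three hf (hprev (x - n) (by omega)) (by rwa [sub_add_cancel]) hlt
  rw [hf.of_pos x ((P.start_pos j x).trans_le hstart)]
  rcases eq_or_add_le_of_dvd_sub hstart (P.dvd_sub_start j x) with heq | hle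
  · have hxm := value_sub_eq_zero_of_eq_start hf (hprev (x - m) (by omega)) heq
    have hxnm := value_sub_shift_sub_eq_two_or_zero_of_eq_start hf
      (hprev (x - n - m) (by omega)) heq
    exact mex_triple_eq (by omega) (by omega)
  · have hxm := value_sub_eq_ite_two_one (hprev (x - m) (by omega)) hle (by omega)
    rw [if_pos hdvd] at hxm
    have hxnm := value_sub_eq_zero_or_three hf (hprev (x - n - m) (by omega))
      (by rwa [sub_add_cancel]) hlt.le
    have hzero := value_eq_zero_or_value_sub_eq_zero hf (hprev (x - n) (by omega))
      (hprev (x - n - m) (by omega)) (by rwa [sub_add_cancel]) hlt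
    exact mex_triple_eq (by omega) (by omega)

lemma value_eq_two (hf : IsSinkValue m n f) (hprev : ∀ y < x, P.Predicts f y)
    (hstart : P.start j x ≤ x) (hfinish : x < P.finish j x) (hdvd : ¬ 2 * m ∣ x - P.start j x) :
    f x = 2 := by
  have hm := P.modulus_pos
  have hn := P.shift_pos
  have hle : P.start j x + m ≤ x :=
    (eq_or_add_le_of_dvd_sub hstart (P.dvd_sub_start j x)).resolve_left
      fun h => hdvd (by simp [← h])
  have hxm := value_sub_eq_ite_two_one (hprev (x - m) (by omega)) hle (by omega)
  rw [if_neg hdvd] at hxm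
  have hxn_le : x - n ≤ P.start j (x - n) := by
    rcases eq_or_add_le_of_dvd_sub hfinish.le (dvd_sub_comm.mp (P.dvd_sub_finish j x)) with h | h
    · omega
    · have := P.finish_le_start_sub_add j x
      omega
  rw [hf.of_pos x ((P.start_pos j x).trans_le hstart)]
  rcases hxn_le.eq_or_lt with heq | hlt
  · have hxn := (hprev (x - n) (by omega) j).1 heq.ge
      (by have := P.start_add_two_mul_le_finish j (x - n); omega)
    rw [← heq, sub_self, if_pos (dvd_zero _)] at hxn
    have hxnm := value_sub_eq_zero_of_eq_start hf (hprev (x - n - m) (by omega)) heq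
    exact mex_triple_eq (by omega) (by omega)
  · have hxn := value_eq_zero_or_three hf (hprev (x - n) (by omega)) (by rwa [sub_add_cancel]) hlt
    have hxnm := value_sub_eq_zero_or_three hf (hprev (x - n - m) (by omega))
      (by rwa [sub_add_cancel]) hlt.le
    have hzero := value_eq_zero_or_value_sub_eq_zero hf (hprev (x - n) (by omega))
      (hprev (x - n - m) (by omega)) (by rwa [sub_add_cancel]) hlt
    exact mex_triple_eq (by omega) (by omega)

lemma start_sub_le_of_finish_le (hfinish : P.finish j x ≤ x) : P.start j (x - n) ≤ x - n := by
  have := P.start_sub_add_le_finish j x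
  omega

lemma sub_lt_finish_of_lt_start_succ (hlt : x < P.start (j + 1) x) :
    x - n < P.finish j (x - n) := by
  rw [start_succ] at hlt
  omega

lemma two_mul_dvd_sub_start_sub_iff :
    2 * m ∣ x - n - P.start j (x - n) ↔ 2 * m ∣ P.start (j + 1) x - x := by
  have h := P.two_mul_dvd_finish_sub_start j (x - n)
  rw [start_succ, show P.finish j (x - n) + n - x = P.finish j (x - n) - P.start j (x - n) -
    (x - n - P.start j (x - n)) by ring, dvd_sub_right h]

lemma value_sub_shift (hprev : P.Predicts f (x - n)) (hfinish : P.finish j x ≤ x)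
    (hlt : x < P.start (j + 1) x) :
    f (x - n) = if 2 * m ∣ P.start (j + 1) x - x then 1 else 2 := by
  rw [(hprev j).1 (start_sub_le_of_finish_le hfinish) (sub_lt_finish_of_lt_start_succ hlt)]
  simp only [two_mul_dvd_sub_start_sub_iff]

lemma value_eq_three (hf : IsSinkValue m n f) (hprev : ∀ y < x, P.Predicts f y)
    (hfinish : P.finish j x ≤ x) (hlt : x < P.start (j + 1) x)
    (hdvd : 2 * m ∣ P.start (j + 1) x - x) : f x = 3 := by
  have hm := P.modulus_pos
  have hn := P.shift_pos
  have hxn := value_sub_shift (hprev (x - n) (by omega)) hfinish hlt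
  rw [if_pos hdvd] at hxn
  have hdvd' := two_mul_dvd_sub_start_sub_iff.mpr hdvd
  have hlow := P.start_sub_add_le_finish j x
  have hhigh := P.finish_le_start_sub_add j x
  rw [hf.of_pos x (by have := P.start_pos j (x - n); omega)]
  -- For this parity `x` opens its 03-phase exactly when `x - n` opens its 12-phase. Otherwise the
  -- options `x - m` and `x - n - m` could share the value 0, or share the value 2.
  rcases eq_or_add_le_of_dvd_sub (start_sub_le_of_finish_le hfinish) hdvd' with heq | hle
  · have hxm := value_sub_eq_two_of_eq_finish (hprev (x - m) (by omega))
      (by omega : x = P.finish j x)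
    have hxnm := value_sub_eq_zero_of_eq_start hf (hprev (x - n - m) (by omega)) heq
    exact mex_triple_eq (by omega) (by omega)
  · have hxm := value_sub_eq_ite_zero_three (j := j) (hprev (x - m) (by omega)) (by omega)
      (by omega)
    rw [if_pos hdvd] at hxm
    have hxnm := value_sub_eq_ite_two_one (j := j) (hprev (x - n - m) (by omega)) (by omega)
      (by have := sub_lt_finish_of_lt_start_succ hlt; omega)
    rw [if_pos hdvd'] at hxnm
    exact mex_triple_eq (by omega) (by omega)

lemma value_eq_zero (hf : IsSinkValue m n f) (hprev : ∀ y < x, P.Predicts f y)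
    (hfinish : P.finish j x ≤ x) (hlt : x < P.start (j + 1) x)
    (hdvd : ¬ 2 * m ∣ P.start (j + 1) x - x) : f x = 0 := by
  have hm := P.modulus_pos
  have hn := P.shift_pos
  have hxn := value_sub_shift (hprev (x - n) (by omega)) hfinish hlt
  rw [if_neg hdvd] at hxn
  have hdvd' := two_mul_dvd_sub_start_sub_iff.not.mpr hdvd
  have hle : P.start j (x - n) + m ≤ x - n :=
    (eq_or_add_le_of_dvd_sub (start_sub_le_of_finish_le hfinish)
      (P.dvd_sub_start j (x - n))).resolve_left fun h => hdvd' (by simp [← h])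
  have hxnm := value_sub_eq_ite_two_one (hprev (x - n - m) (by omega)) hle
    (by have := sub_lt_finish_of_lt_start_succ hlt; omega)
  rw [if_neg hdvd'] at hxnm
  have hxm : f (x - m) = 2 ∨ f (x - m) = 3 := by
    refine (eq_or_add_le_of_dvd_sub hfinish (P.dvd_sub_finish j x)).imp
      (value_sub_eq_two_of_eq_finish (hprev (x - m) (by omega))) fun hle => ?_
    rw [value_sub_eq_ite_zero_three (hprev (x - m) (by omega)) hle (by omega), if_neg hdvd]
  rw [hf.of_pos x (by have := P.start_pos j (x - n); omega)]
  exact mex_triple_eq (by omega) (by omega)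

variable (P)

theorem predicts (hf : IsSinkValue m n f) (x : ℤ) : P.Predicts f x := by
  induction hN : x.toNat using Nat.strong_induction_on generalizing x with
  | _ N ih =>
    subst hN
    have hprev : 0 < x → ∀ y < x, P.Predicts f y := fun hx y hy => ih _ (by omega) y rfl
    intro j
    have hpos := P.start_pos j x
    have hle := P.start_add_two_mul_le_finish j x
    have hm := P.modulus_pos
    refine ⟨fun h₁ h₂ => ?_, fun h₁ h₂ => ?_⟩ <;> split_ifs with hdvd
    · exact value_eq_one hf (hprev (by omega)) h₁ h₂ hdvd
    · exact value_eq_two hf (hprev (by omega)) h₁ h₂ hdvd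
    · exact value_eq_three hf (hprev (by omega)) h₁ h₂ hdvd
    · exact value_eq_zero hf (hprev (by omega)) h₁ h₂ hdvd

theorem value_add_eq (hf : IsSinkValue m n f) {p : ℤ} {q : ℕ}
    (hstart : ∀ j x, P.start (j + q) (x + p) = P.start j x + p) (hx : -m < x) :
    f (x + p) = f x := by
  rcases le_or_gt x 0 with hx₀ | hx₀
  · have h : x + p + m = P.start (0 + q) (x + p + m) := by
      rw [add_right_comm, hstart, ← P.start_sub_self, add_sub_cancel_right,
        P.start_zero_eq_add_self hx hx₀]
    have := value_sub_eq_zero_of_eq_start hf (P.predicts hf _) h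
    rwa [add_sub_cancel_right, ← hf.of_nonpos x hx₀] at this
  have hfinish (j : ℕ) : P.finish (j + q) (x + p) = P.finish j x + p := by
    rw [finish_eq, finish_eq, add_right_comm x, add_right_comm j, hstart]
    ring
  obtain ⟨j, hle, hlt⟩ := P.exists_mem_phase hx₀
  have hval := P.predicts hf x j
  have hval' := P.predicts hf (x + p) (j + q)
  rw [add_right_comm, hstart, hstart, hfinish, add_sub_add_right_eq_sub,
    add_sub_add_right_eq_sub] at hval'
  rcases lt_or_ge x (P.finish j x) with h | h
  · rw [hval.1 hle h, hval'.1 (by omega) (by omega)]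
  · rw [hval.2 h hlt, hval'.2 (by omega) (by omega)]

end PhaseSystem

/-! ### The closed formula for the phases -/

section ClosedFormula

variable {m n e : ℤ} (hm : 0 < m)

lemma toIocMod_eq_of_sub_eq {y z c : ℤ} (hc : m ∣ c) (h : z - y = c) :
    toIocMod hm 0 y = toIocMod hm 0 z := by
  obtain ⟨k, rfl⟩ := hc
  exact (toIocMod_eq_toIocMod hm).mpr ⟨k, by rw [h, smul_eq_mul, mul_comm]⟩

lemma dvd_sub_toIocMod (y : ℤ) : m ∣ y - toIocMod hm 0 y :=
  ⟨toIocDiv hm 0 y, by rw [self_sub_toIocMod, smul_eq_mul, mul_comm]⟩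

lemma toIocMod_zero_mem_Ioc (y : ℤ) : toIocMod hm 0 y ∈ Set.Ioc 0 m := by
  simpa only [zero_add] using toIocMod_mem_Ioc hm 0 y

lemma toIocMod_sub_eq_or (he₀ : 0 ≤ e) (hem : e ≤ m) (y : ℤ) :
    toIocMod hm 0 (y - e) = toIocMod hm 0 y - e ∨
      toIocMod hm 0 (y - e) = toIocMod hm 0 y - e + m := by
  obtain ⟨h₁, h₂⟩ := toIocMod_zero_mem_Ioc hm y
  by_cases hlt : e < toIocMod hm 0 y
  · refine Or.inl ((toIocMod_eq_iff hm).mpr ⟨⟨by omega, by omega⟩, toIocDiv hm 0 y, ?_⟩)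
    linear_combination -(toIocMod_add_toIocDiv_zsmul hm 0 y)
  · refine Or.inr ((toIocMod_eq_iff hm).mpr ⟨⟨by omega, by omega⟩, toIocDiv hm 0 y - 1, ?_⟩)
    rw [sub_smul, one_smul]
    linear_combination -(toIocMod_add_toIocDiv_zsmul hm 0 y)

/-- The closed formula for the first position of the `j`-th 12-phase in the column of `x`, for the
subtraction set `{m, n, m + n}` with `n ≡ e` modulo `2 * m`; `toIocMod hm 0 y` is the
representative of `y` modulo `m` in `(0, m]`. -/
noncomputable def phaseStart (n e : ℤ) (j : ℕ) (x : ℤ) : ℤ :=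
  (2 * n + e) * j + 2 * toIocMod hm 0 (x - 2 * (e * j)) - toIocMod hm 0 (x - e * j)

/-- The closed formula for the first position after the `j`-th 12-phase in the column of `x`. -/
noncomputable def phaseFinish (n e : ℤ) (j : ℕ) (x : ℤ) : ℤ :=
  (2 * n + e) * j + n + e + 2 * toIocMod hm 0 (x - 2 * (e * j) - e) - toIocMod hm 0 (x - e * j)

lemma phaseStart_zero (n e x : ℤ) : phaseStart hm n e 0 x = toIocMod hm 0 x := by
  simp only [phaseStart, Nat.cast_zero, mul_zero, sub_zero, zero_add]
  ring

lemma phaseStart_sub_self (n e : ℤ) (j : ℕ) (x : ℤ) :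
    phaseStart hm n e j (x - m) = phaseStart hm n e j x := by
  simp only [phaseStart, sub_right_comm x m, toIocMod_sub]

lemma phaseStart_sub (hne : m ∣ n - e) (j : ℕ) (x : ℤ) :
    phaseStart hm n e j (x - n) = (2 * n + e) * j +
      2 * toIocMod hm 0 (x - 2 * (e * j) - e) - toIocMod hm 0 (x - e * j - e) := by
  have hcongr (c : ℤ) : toIocMod hm 0 (x - n - c) = toIocMod hm 0 (x - c - e) :=
    toIocMod_eq_of_sub_eq hm hne (by ring)
  rw [phaseStart, hcongr, hcongr]

lemma phaseStart_succ (hne : m ∣ n - e) (j : ℕ) (x : ℤ) :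
    phaseStart hm n e (j + 1) x = phaseFinish hm n e j (x - n) + n := by
  have h₁ : toIocMod hm 0 (x - n - 2 * (e * j) - e) = toIocMod hm 0 (x - 2 * (e * (j + 1))) :=
    toIocMod_eq_of_sub_eq hm hne (by ring)
  have h₂ : toIocMod hm 0 (x - n - e * j) = toIocMod hm 0 (x - e * (j + 1)) :=
    toIocMod_eq_of_sub_eq hm hne (by ring)
  rw [phaseStart, phaseFinish, Nat.cast_succ, h₁, h₂]
  ring

lemma dvd_sub_phaseStart (hne : m ∣ n - e) (j : ℕ) (x : ℤ) : m ∣ x - phaseStart hm n e j x := by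
  have h₁ := (dvd_sub_toIocMod hm (x - 2 * (e * j))).mul_left 2
  have h₂ := dvd_sub_toIocMod hm (x - e * j)
  have heq : x - phaseStart hm n e j x = 2 * (x - 2 * (e * j) - toIocMod hm 0 (x - 2 * (e * j))) -
      (x - e * j - toIocMod hm 0 (x - e * j)) - (n - e) * (2 * j) := by
    rw [phaseStart]
    ring
  exact heq ▸ (h₁.sub h₂).sub (hne.mul_right (2 * j))

lemma two_mul_dvd_phaseFinish_sub_phaseStart (he₀ : 0 ≤ e) (hem : e ≤ m) (hne : 2 * m ∣ n - e)
    (j : ℕ) (x : ℤ) : 2 * m ∣ phaseFinish hm n e j x - phaseStart hm n e j x := by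
  rcases toIocMod_sub_eq_or hm he₀ hem (x - 2 * (e * j)) with h | h
  · have heq : phaseFinish hm n e j x - phaseStart hm n e j x = n - e := by
      rw [phaseFinish, phaseStart, h]
      ring
    exact heq ▸ hne
  · have heq : phaseFinish hm n e j x - phaseStart hm n e j x = n - e + 2 * m := by
      rw [phaseFinish, phaseStart, h]
      ring
    exact heq ▸ hne.add dvd_rfl

lemma phaseStart_add (hne : m ∣ n - e) {q : ℕ} (hq : m ∣ e * q) (j : ℕ) (x : ℤ) :
    phaseStart hm n e (j + q) (x + (2 * n + e) * q) =
      phaseStart hm n e j x + (2 * n + e) * q := by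
  have hnq := hne.mul_right (2 * q)
  have h₁ : toIocMod hm 0 (x + (2 * n + e) * q - 2 * (e * (j + q))) =
      toIocMod hm 0 (x - 2 * (e * j)) :=
    toIocMod_eq_of_sub_eq hm (hnq.add hq).neg_right (by ring)
  have h₂ : toIocMod hm 0 (x + (2 * n + e) * q - e * (j + q)) = toIocMod hm 0 (x - e * j) :=
    toIocMod_eq_of_sub_eq hm (hnq.add (hq.mul_right 2)).neg_right (by ring)
  rw [phaseStart, Nat.cast_add, h₁, h₂, phaseStart]
  ring

/-- The phase system with boundaries `phaseStart` and `phaseFinish`. -/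
noncomputable def phaseSystem (he₀ : 0 ≤ e) (hem : e ≤ m) (hne : 2 * m ∣ n - e)
    (hle : e + 2 * m ≤ n) : PhaseSystem m n where
  start := phaseStart hm n e
  finish := phaseFinish hm n e
  start_sub_self := phaseStart_sub_self hm n e
  dvd_sub_start := dvd_sub_phaseStart hm (dvd_of_mul_left_dvd hne)
  start_zero_pos x := phaseStart_zero hm n e x ▸ (toIocMod_zero_mem_Ioc hm x).1
  start_zero_le x := phaseStart_zero hm n e x ▸ (toIocMod_zero_mem_Ioc hm x).2
  two_mul_dvd_finish_sub_start := two_mul_dvd_phaseFinish_sub_phaseStart hm he₀ hem hne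
  start_add_two_mul_le_finish j x := by
    rw [phaseStart, phaseFinish]
    rcases toIocMod_sub_eq_or hm he₀ hem (x - 2 * (e * j)) with h | h <;> omega
  start_succ := phaseStart_succ hm (dvd_of_mul_left_dvd hne)
  start_sub_add_le_finish j x := by
    rw [phaseStart_sub hm (dvd_of_mul_left_dvd hne), phaseFinish]
    rcases toIocMod_sub_eq_or hm he₀ hem (x - e * j) with h | h <;> omega
  finish_le_start_sub_add j x := by
    rw [phaseStart_sub hm (dvd_of_mul_left_dvd hne), phaseFinish]
    rcases toIocMod_sub_eq_or hm he₀ hem (x - e * j) with h | h <;> omega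

end ClosedFormula

/-! ### Periodicity -/

theorem sinkVal_add_eq {m n e q : ℕ} (hm : 0 < m) (hem : e ≤ m) (hne : 2 * m ∣ n - e)
    (hle : e + 2 * m ≤ n) (hq : m ∣ e * q) (x : ℕ) :
    sinkVal {m, n, m + n} (x + (2 * n + e) * q) = sinkVal {m, n, m + n} x := by
  have hne' : 2 * (m : ℤ) ∣ n - e := by
    rw [← Nat.cast_sub (by omega)]
    exact_mod_cast hne
  have hq' : (m : ℤ) ∣ e * (q : ℕ) := by exact_mod_cast hq
  have hstart := phaseStart_add (Nat.cast_pos.mpr hm) (dvd_of_mul_left_dvd hne') hq'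
  have h := (phaseSystem (Nat.cast_pos.mpr hm) (Nat.cast_nonneg e) (by omega) hne'
    (by omega)).value_add_eq (isSinkValue_sinkVal hm (by omega)) hstart (by omega : -(m : ℤ) < x)
  exact_mod_cast h

theorem stmt6_general (m δ : ℕ) (hm : 0 < m) (S : Finset ℕ) (hS : S = {m, m + δ, 2 * m + δ})
    (d : ℕ) (hd : d = δ % (2 * m)) (hdm : m ≤ d) :
    Nat.gcd m d ∣ m * (m + 2 * δ + d) ∧
      Function.Periodic (sinkVal S) (m * (m + 2 * δ + d) / Nat.gcd m d) := by
  refine ⟨(Nat.gcd_dvd_left m d).mul_right _, fun x => ?_⟩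
  have hdlt : d < 2 * m := hd ▸ Nat.mod_lt δ (by omega)
  have hdδ : d ≤ δ := hd ▸ Nat.mod_le δ (2 * m)
  have hne : 2 * m ∣ m + δ - (d - m) := by
    rw [show m + δ - (d - m) = δ - d + 2 * m by omega, hd]
    exact (Nat.dvd_sub_mod δ).add dvd_rfl
  have hq : m ∣ (d - m) * (m / Nat.gcd m d) := by
    rw [Nat.sub_mul, ← Nat.mul_div_assoc _ (Nat.gcd_dvd_left m d),
      Nat.mul_div_right_comm (Nat.gcd_dvd_right m d)]
    exact Nat.dvd_sub (dvd_mul_left _ _) (dvd_mul_right _ _)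
  have hperiod : m * (m + 2 * δ + d) / Nat.gcd m d =
      (2 * (m + δ) + (d - m)) * (m / Nat.gcd m d) := by
    rw [show m + 2 * δ + d = 2 * (m + δ) + (d - m) by omega,
      Nat.mul_div_right_comm (Nat.gcd_dvd_left m d), mul_comm]
  rw [hS, hperiod, show 2 * m + δ = m + (m + δ) by omega]
  exact sinkVal_add_eq hm (by omega) hne (by omega) hq x

theorem stmt6 (m δ : ℕ) (hm : 0 < m) (hδ : 0 < δ)
    (S : Finset ℕ) (hS : S = {m, m + δ, 2 * m + δ})
    (d : ℕ) (hd : d = δ % (2 * m)) (hdm : m < d) :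
    Nat.gcd m d ∣ m * (m + 2 * δ + d) ∧
      ∀ x : ℕ, 1 ≤ x →
        sinkVal S (x + m * (m + 2 * δ + d) / Nat.gcd m d) = sinkVal S x :=
  (stmt6_general m δ hm S hS d hd hdm.le).imp_right fun hperiodic x _ => hperiodic x
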